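/- arXiv:2212.05125 — 2 statements merged into one kernel-verified Lean document; each statement's English description precedes it below -/
import Mathlib

section
/- Let X and Y be standard Borel spaces, e : Y → X a measurable map, μ a probability measure on X, and κ, η two Markov kernels from X to Y such that for μ-almost every x ∈ X the measures κ(x) and η(x) give full mass to the fiber e⁻¹({x}), i.e. κ(x)(e⁻¹({x})) = η(x)(e⁻¹({x})) = 1. Then the Kullback–Leibler divergence satisfies KL(μ.bind κ ‖ μ.bind η) = ∫_X KL(κ(x) ‖ η(x)) dμ(x), as an identity in [0, ∞]. -/
open MeasureTheory ProbabilityTheory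
open scoped ENNReal

open Classical in
/-- Kullback–Leibler divergence of two measures, valued in `[0, ∞]`:
`∫ log (dP/dQ) dP` when `P ≪ Q` and the log-likelihood ratio is integrable,
and `∞` otherwise. -/
noncomputable def klDiv {α : Type*} [MeasurableSpace α] (P Q : Measure α) : ℝ≥0∞ :=
  if P ≪ Q ∧ Integrable (llr P Q) P then ENNReal.ofReal (∫ x, llr P Q x ∂P) else ⊤

/-!
Since `e` recovers the starting point `x` from a `κ x`-typical `y`, pushing `μ.bind κ` forward
along `y ↦ (e y, y)` gives the joint law `μ ⊗ₘ κ`, and likewise for `η`. This map has the second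
projection as a left inverse, so two applications of the data-processing inequality show that it
preserves the divergence. For the joint laws, the density `d(μ ⊗ₘ κ)/d(μ ⊗ₘ η)` at `(x, y)` is
`d(κ x)/d(η x)` at `y`. If `κ x ≪ η x` for almost every `x`, Tonelli's theorem applied to the
nonnegative function `klFun` of this density concludes; otherwise both sides are infinite.
-/

-- Mathlib's divergence adds `Q.real univ - P.real univ` to the integral of `llr P Q`.
lemma klDiv_eq_informationTheory_klDiv {α : Type*} [MeasurableSpace α] {P Q : Measure α}
    (h : P .univ = Q .univ) : klDiv P Q = InformationTheory.klDiv P Q := by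
  rw [klDiv, InformationTheory.klDiv_def, measureReal_def, measureReal_def, h]
  simp only [add_sub_cancel_right]

lemma klDiv_map_of_leftInverse {α β : Type*} [MeasurableSpace α] [MeasurableSpace β]
    {f : α → β} {g : β → α} (hf : Measurable f) (hg : Measurable g) (hgf : g.LeftInverse f)
    (P Q : Measure α) [IsFiniteMeasure P] [IsFiniteMeasure Q] :
    InformationTheory.klDiv (P.map f) (Q.map f) = InformationTheory.klDiv P Q := by
  refine (InformationTheory.klDiv_map_le P Q hf).antisymm ?_
  have map_map_eq (R : Measure α) : (R.map f).map g = R := by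
    rw [Measure.map_map hg hf, hgf.comp_eq_id, Measure.map_id]
  simpa only [map_map_eq] using InformationTheory.klDiv_map_le (P.map f) (Q.map f) hg

section Kernel

variable {X Y : Type*} [MeasurableSpace X] [MeasurableSpace Y]

lemma bind_apply_congr {μ : Measure X} {κ η : Kernel X Y} {s : Set Y} (hs : MeasurableSet s)
    (h : ∀ᵐ x ∂μ, κ x s = η x s) : μ.bind κ s = μ.bind η s := by
  rw [Measure.bind_apply hs κ.aemeasurable, Measure.bind_apply hs η.aemeasurable,
    lintegral_congr_ae h]

lemma map_prodMk_bind_eq_compProd {e : Y → X} (he : Measurable e) (μ : Measure X) [SFinite μ]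
    (κ : Kernel X Y) [IsSFiniteKernel κ] (hκ : ∀ᵐ x ∂μ, ∀ᵐ y ∂κ x, e y = x) :
    (μ.bind κ).map (fun y ↦ (e y, y)) = μ ⊗ₘ κ := by
  have hg : Measurable fun y ↦ (e y, y) := he.prodMk measurable_id
  ext s hs
  rw [Measure.map_apply hg hs, Measure.bind_apply (hg hs) κ.aemeasurable,
    Measure.compProd_apply hs]
  refine lintegral_congr_ae ?_
  filter_upwards [hκ] with x hx
  refine measure_congr ?_
  filter_upwards [hx] with y hy
  exact congrArg (fun x' ↦ (x', y) ∈ s) hy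

variable [MeasurableSpace.CountableOrCountablyGenerated X Y]
  (μ : Measure X) [IsFiniteMeasure μ] (κ η : Kernel X Y) [IsFiniteKernel κ] [IsFiniteKernel η]

lemma rnDeriv_compProd_same_left :
    (μ ⊗ₘ κ).rnDeriv (μ ⊗ₘ η) =ᵐ[μ ⊗ₘ η] fun p ↦ κ.rnDeriv η p.1 p.2 := by
  have hsing : μ ⊗ₘ κ.singularPart η ⟂ₘ μ ⊗ₘ η :=
    .compProd_of_right μ μ (.of_forall (κ.mutuallySingular_singularPart η))
  have hdecomp : μ ⊗ₘ κ =
      μ ⊗ₘ κ.singularPart η + (μ ⊗ₘ η).withDensity fun p ↦ κ.rnDeriv η p.1 p.2 := by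
    rw [← Measure.compProd_withDensity (κ.measurable_rnDeriv η), ← Measure.compProd_add_right,
      add_comm, κ.rnDeriv_add_singularPart η]
  exact (Measure.eq_rnDeriv (κ.measurable_rnDeriv η) hsing hdecomp).symm

open scoped Classical in
lemma klDiv_apply_eq_lintegral_klFun_rnDeriv (x : X) :
    InformationTheory.klDiv (κ x) (η x) =
      if κ x ≪ η x then
        ∫⁻ y, ENNReal.ofReal (InformationTheory.klFun (κ.rnDeriv η x y).toReal) ∂η x
      else ∞ := by
  have hcongr : ∫⁻ y, ENNReal.ofReal (InformationTheory.klFun (κ.rnDeriv η x y).toReal) ∂η x =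
      ∫⁻ y, ENNReal.ofReal (InformationTheory.klFun ((κ x).rnDeriv (η x) y).toReal) ∂η x := by
    refine lintegral_congr_ae ?_
    filter_upwards [κ.rnDeriv_eq_rnDeriv_measure (η := η) (a := x)] with y hy
    rw [hy]
  rw [hcongr, InformationTheory.klDiv_eq_lintegral_klFun]

lemma measurable_klDiv_apply :
    Measurable fun x ↦ InformationTheory.klDiv (κ x) (η x) := by
  classical
  simp only [klDiv_apply_eq_lintegral_klFun_rnDeriv]
  exact .ite (Kernel.measurableSet_absolutelyContinuous κ η)
    (Measurable.lintegral_kernel_prod_right (by fun_prop)) measurable_const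

theorem klDiv_compProd_same_left_eq_lintegral :
    InformationTheory.klDiv (μ ⊗ₘ κ) (μ ⊗ₘ η) =
      ∫⁻ x, InformationTheory.klDiv (κ x) (η x) ∂μ := by
  by_cases hac : ∀ᵐ x ∂μ, κ x ≪ η x
  · calc InformationTheory.klDiv (μ ⊗ₘ κ) (μ ⊗ₘ η)
      _ = ∫⁻ p, ENNReal.ofReal (InformationTheory.klFun
            ((μ ⊗ₘ κ).rnDeriv (μ ⊗ₘ η) p).toReal) ∂(μ ⊗ₘ η) :=
          InformationTheory.klDiv_eq_lintegral_klFun_of_ac (.compProd_right hac)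
      _ = ∫⁻ p, ENNReal.ofReal (InformationTheory.klFun
            (κ.rnDeriv η p.1 p.2).toReal) ∂(μ ⊗ₘ η) := by
          refine lintegral_congr_ae ?_
          filter_upwards [rnDeriv_compProd_same_left μ κ η] with p hp
          rw [hp]
      _ = ∫⁻ x, ∫⁻ y, ENNReal.ofReal (InformationTheory.klFun
            (κ.rnDeriv η x y).toReal) ∂η x ∂μ :=
          Measure.lintegral_compProd (by fun_prop)
      _ = ∫⁻ x, InformationTheory.klDiv (κ x) (η x) ∂μ := by
          refine lintegral_congr_ae ?_
          filter_upwards [hac] with x hx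
          rw [klDiv_apply_eq_lintegral_klFun_rnDeriv, if_pos hx]
  · have htop : μ {x | InformationTheory.klDiv (κ x) (η x) = ∞} ≠ 0 := fun h ↦
      hac <| (measure_eq_zero_iff_ae_notMem.1 h).mono fun _ hx ↦
        not_not.1 (mt InformationTheory.klDiv_of_not_ac hx)
    rw [InformationTheory.klDiv_of_not_ac
        (mt Measure.absolutelyContinuous_compProd_right_iff.1 hac),
      lintegral_eq_top_of_measure_eq_top_ne_zero (measurable_klDiv_apply κ η).aemeasurable htop]

theorem klDiv_bind_eq_integral_klDiv_general {e : Y → X} (he : Measurable e)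
    (hmass : ∀ᵐ x ∂μ, κ x .univ = η x .univ)
    (hκ : ∀ᵐ x ∂μ, ∀ᵐ y ∂κ x, e y = x) (hη : ∀ᵐ x ∂μ, ∀ᵐ y ∂η x, e y = x) :
    klDiv (μ.bind κ) (μ.bind η) = ∫⁻ x, klDiv (κ x) (η x) ∂μ :=
  calc klDiv (μ.bind κ) (μ.bind η)
    _ = InformationTheory.klDiv (μ.bind κ) (μ.bind η) :=
        klDiv_eq_informationTheory_klDiv (bind_apply_congr .univ hmass)
    _ = InformationTheory.klDiv ((μ.bind κ).map fun y ↦ (e y, y))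
          ((μ.bind η).map fun y ↦ (e y, y)) :=
        (klDiv_map_of_leftInverse (he.prodMk measurable_id) measurable_snd (fun _ ↦ rfl) _ _).symm
    _ = InformationTheory.klDiv (μ ⊗ₘ κ) (μ ⊗ₘ η) := by
        rw [map_prodMk_bind_eq_compProd he μ κ hκ, map_prodMk_bind_eq_compProd he μ η hη]
    _ = ∫⁻ x, InformationTheory.klDiv (κ x) (η x) ∂μ :=
        klDiv_compProd_same_left_eq_lintegral μ κ η
    _ = ∫⁻ x, klDiv (κ x) (η x) ∂μ :=
        lintegral_congr_ae (hmass.mono fun _ hx ↦ (klDiv_eq_informationTheory_klDiv hx).symm)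

end Kernel

/-- For Markov kernels `κ, η` from `X` to `Y` that (μ-a.e.) give full mass to the fiber
of the measurable map `e : Y → X`, the KL divergence of the mixtures equals the
μ-average of the KL divergences of the kernels. -/
theorem klDiv_bind_eq_integral_klDiv
    {X Y : Type*} [MeasurableSpace X] [StandardBorelSpace X]
    [MeasurableSpace Y] [StandardBorelSpace Y]
    (e : Y → X) (he : Measurable e)
    (μ : Measure X) [IsProbabilityMeasure μ]
    (κ η : Kernel X Y) [IsMarkovKernel κ] [IsMarkovKernel η]
    (hfib : ∀ᵐ x ∂μ, κ x (e ⁻¹' {x}) = 1 ∧ η x (e ⁻¹' {x}) = 1) :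
    klDiv (μ.bind κ) (μ.bind η) = ∫⁻ x, klDiv (κ x) (η x) ∂μ := by
  simp only [← mem_ae_iff_prob_eq_one (he (measurableSet_singleton _))] at hfib
  exact klDiv_bind_eq_integral_klDiv_general μ κ η he (by simp)
    (hfib.mono fun _ ↦ And.left) (hfib.mono fun _ ↦ And.right)
end

section
/- Let d ≥ 1, let b : ℝ^d → ℝ^d be continuously differentiable, D : ℝ^d → ℝ^{d×d} twice continuously differentiable with D(x) symmetric for all x, and ρ : ℝ^d → ℝ twice continuously differentiable with ρ(x) > 0 for all x, satisfying the stationary Fokker–Planck equation Σ_{i=1}^d ∂_i(b_i ρ)(x) = Σ_{i,j=1}^d ∂_i∂_j(D_{ij} ρ)(x) for all x ∈ ℝ^d. Then for all smooth compactly supported f, g : ℝ^d → ℝ, ∫ f(x)·(⟨b(x), ∇g(x)⟩ + Σ_{i,j} D_{ij}(x) ∂_i∂_j g(x))·ρ(x) dx = ∫ g(x)·(−⟨b(x), ∇f(x)⟩ + 2ρ(x)⁻¹⟨∇·(Dρ)(x), ∇f(x)⟩ + Σ_{i,j} D_{ij}(x) ∂_i∂_j f(x))·ρ(x) dx, where (∇·(Dρ))_i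 := Σ_j ∂_j(D_{ij} ρ). -/
open MeasureTheory

/-- The `i`-th partial derivative of `f : (ι → ℝ) → ℝ` at `x`. -/
noncomputable def pd {ι : Type*} [Fintype ι] [DecidableEq ι] (i : ι)
    (f : (ι → ℝ) → ℝ) (x : ι → ℝ) : ℝ :=
  fderiv ℝ f x (Pi.single i 1)

/-!
Write `β = b ρ` and `A = D ρ`, let `∇·A` be the row-wise divergence of `A`, and let
`J = β - ∇·A` be the stationary probability current. Since `A` is symmetric,
`ρ L g = ∇·(A ∇g) + ⟨J, ∇g⟩` and `ρ L̄ f = ∇·(A ∇f) - ⟨J, ∇f⟩`. The first term is symmetric under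
the Lebesgue pairing because `A` is, and the second is antisymmetric because the stationary
Fokker–Planck equation says precisely that `∇·J = 0`. Both facts are integrations by parts.
-/

section Generators

open scoped Matrix

variable {ι : Type*} [Fintype ι] [DecidableEq ι]

/-- The gradient of `f`, as a vector of partial derivatives. Coordinates are used, rather than
Mathlib's `gradient`, because `ι → ℝ` carries the sup norm and is not an inner product space. -/
noncomputable def grad (f : (ι → ℝ) → ℝ) (x : ι → ℝ) : ι → ℝ :=
  fun i => pd i f x

/-- The divergence `∇·V` of a vector field `V`. -/
noncomputable def divergence (V : (ι → ℝ) → ι → ℝ) (x : ι → ℝ) : ℝ :=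
  ∑ i, pd i (fun y => V y i) x

/-- The divergence `∇·A` of a matrix field `A`, taken along rows:
`(∇·A)_i = ∑ j, ∂_j A_{ij}`. -/
noncomputable def matrixDivergence (A : (ι → ℝ) → Matrix ι ι ℝ) (x : ι → ℝ) : ι → ℝ :=
  fun i => divergence (fun y => A y i) x

lemma pd_mul {i : ι} {u v : (ι → ℝ) → ℝ} {x : ι → ℝ} (hu : DifferentiableAt ℝ u x)
    (hv : DifferentiableAt ℝ v x) :
    pd i (fun y => u y * v y) x = u x * pd i v x + pd i u x * v x := by
  simp [pd, fderiv_fun_mul hu hv, mul_comm (v x)]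

lemma pd_sub {i : ι} {u v : (ι → ℝ) → ℝ} {x : ι → ℝ} (hu : DifferentiableAt ℝ u x)
    (hv : DifferentiableAt ℝ v x) :
    pd i (fun y => u y - v y) x = pd i u x - pd i v x := by
  simp [pd, fderiv_fun_sub hu hv]

lemma pd_sum {κ : Type*} {s : Finset κ} {i : ι} {u : κ → (ι → ℝ) → ℝ} {x : ι → ℝ}
    (hu : ∀ k ∈ s, DifferentiableAt ℝ (u k) x) :
    pd i (fun y => ∑ k ∈ s, u k y) x = ∑ k ∈ s, pd i (u k) x := by
  simp [pd, fderiv_fun_sum hu]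

lemma contDiff_pd {m n : WithTop ℕ∞} {u : (ι → ℝ) → ℝ} (hu : ContDiff ℝ n u) (hmn : m + 1 ≤ n)
    (i : ι) : ContDiff ℝ m (pd i u) :=
  (hu.fderiv_right hmn).clm_apply contDiff_const

lemma continuous_pd {u : (ι → ℝ) → ℝ} (hu : ContDiff ℝ 1 u) (i : ι) : Continuous (pd i u) :=
  (contDiff_pd hu (zero_add 1).le i).continuous

lemma contDiff_matrixDivergence {A : (ι → ℝ) → Matrix ι ι ℝ}
    (hA : ∀ i j, ContDiff ℝ 2 fun x => A x i j) (i : ι) :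
    ContDiff ℝ 1 fun x => matrixDivergence A x i :=
  ContDiff.sum fun j _ => contDiff_pd (hA i j) one_add_one_eq_two.le j

lemma divergence_sub {V W : (ι → ℝ) → ι → ℝ} {x : ι → ℝ}
    (hV : ∀ i, DifferentiableAt ℝ (fun y => V y i) x)
    (hW : ∀ i, DifferentiableAt ℝ (fun y => W y i) x) :
    divergence (V - W) x = divergence V x - divergence W x := by
  simp only [divergence, Pi.sub_apply, pd_sub (hV _) (hW _), Finset.sum_sub_distrib]

lemma divergence_smul {u : (ι → ℝ) → ℝ} {V : (ι → ℝ) → ι → ℝ} {x : ι → ℝ}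
    (hu : DifferentiableAt ℝ u x) (hV : ∀ i, DifferentiableAt ℝ (fun y => V y i) x) :
    divergence (fun y => u y • V y) x = u x * divergence V x + V x ⬝ᵥ grad u x := by
  simp only [divergence, dotProduct, grad, Pi.smul_apply, smul_eq_mul, pd_mul hu (hV _),
    Finset.sum_add_distrib, Finset.mul_sum, mul_comm (pd _ u x)]

lemma divergence_matrixDivergence {A : (ι → ℝ) → Matrix ι ι ℝ}
    (hA : ∀ i j, ContDiff ℝ 2 fun x => A x i j) (x : ι → ℝ) :
    divergence (matrixDivergence A) x = ∑ i, ∑ j, pd i (pd j fun y => A y i j) x :=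
  Finset.sum_congr rfl fun i _ =>
    pd_sum fun j _ => (contDiff_pd (hA i j) one_add_one_eq_two.le j).differentiable one_ne_zero x

lemma divergence_mulVec_grad {A : (ι → ℝ) → Matrix ι ι ℝ} {f : (ι → ℝ) → ℝ} {x : ι → ℝ}
    (hA : ∀ i j, DifferentiableAt ℝ (fun y => A y i j) x)
    (hf : ∀ j, DifferentiableAt ℝ (pd j f) x) :
    divergence (fun y => A y *ᵥ grad f y) x =
      ∑ i, ∑ j, A x i j * pd i (pd j f) x + matrixDivergence (fun y => (A y)ᵀ) x ⬝ᵥ grad f x := by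
  have product_rule (i : ι) : pd i (fun y => (A y *ᵥ grad f y) i) x =
      ∑ j, (A x i j * pd i (pd j f) x + pd i (fun y => A y i j) x * pd j f x) :=
    (pd_sum fun j _ => (hA i j).mul (hf j)).trans
      (Finset.sum_congr rfl fun j _ => pd_mul (hA i j) (hf j))
  simp only [divergence, product_rule, Finset.sum_add_distrib, matrixDivergence, dotProduct, grad,
    Matrix.transpose_apply, Finset.sum_mul]
  rw [Finset.sum_comm (f := fun i j => pd i (fun y => A y i j) x * pd j f x)]

lemma hasCompactSupport_smul_fderiv {E F : Type*} [NormedAddCommGroup E] [NormedSpace ℝ E]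
    [NormedAddCommGroup F] [NormedSpace ℝ F] {u : E → ℝ} {v : E → F} (hu : Continuous u)
    (huv : HasCompactSupport fun x => u x • v x) :
    HasCompactSupport fun x => u x • fderiv ℝ v x := by
  refine huv.mono' fun x hx => ?_
  contrapose! hx
  rw [Function.notMem_support, smul_eq_zero, or_iff_not_imp_left]
  intro hux
  have v_eventuallyEq_zero : v =ᶠ[nhds x] 0 := by
    filter_upwards [notMem_tsupport_iff_eventuallyEq.mp hx, hu.continuousAt.eventually_ne hux]
      with y huvy huy using (smul_eq_zero.mp huvy).resolve_left huy
  simp [v_eventuallyEq_zero.fderiv_eq]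

lemma hasCompactSupport_mul_pd {u v : (ι → ℝ) → ℝ} (hu : Continuous u)
    (huv : HasCompactSupport fun x => u x * v x) (i : ι) :
    HasCompactSupport fun x => u x * pd i v x :=
  (hasCompactSupport_smul_fderiv hu huv).comp_left
    (g := fun L : (ι → ℝ) →L[ℝ] ℝ => L (Pi.single i 1)) rfl

lemma hasCompactSupport_mul_mulVec_grad {u v : (ι → ℝ) → ℝ} {A : (ι → ℝ) → Matrix ι ι ℝ}
    (hu : Continuous u) (huv : HasCompactSupport fun x => u x * v x) (i : ι) :
    HasCompactSupport fun x => u x * (A x *ᵥ grad v x) i := by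
  refine (hasCompactSupport_smul_fderiv hu huv).mono fun x hx => ?_
  contrapose! hx
  rcases smul_eq_zero.mp (Function.notMem_support.mp hx) with hux | hvx
  · simp [hux]
  · simp [Matrix.mulVec, dotProduct, grad, pd, hvx]

lemma integrable_mul_pd {u v : (ι → ℝ) → ℝ} (hu : Continuous u) (hv : ContDiff ℝ 1 v)
    (huv : HasCompactSupport fun x => u x * v x) (i : ι) :
    Integrable fun x => u x * pd i v x :=
  (hu.mul (continuous_pd hv i)).integrable_of_hasCompactSupport (hasCompactSupport_mul_pd hu huv i)

lemma integrable_mul_divergence {u : (ι → ℝ) → ℝ} {V : (ι → ℝ) → ι → ℝ} (hu : Continuous u)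
    (hV : ∀ i, ContDiff ℝ 1 fun x => V x i)
    (huV : ∀ i, HasCompactSupport fun x => u x * V x i) :
    Integrable fun x => u x * divergence V x := by
  simp only [divergence, Finset.mul_sum]
  exact integrable_finsetSum _ fun i _ => integrable_mul_pd hu (hV i) (huV i) i

lemma integral_mul_pd_eq_neg {u v : (ι → ℝ) → ℝ} (hu : ContDiff ℝ 1 u) (hv : ContDiff ℝ 1 v)
    (huv : HasCompactSupport fun x => u x * v x) (i : ι) :
    ∫ x, u x * pd i v x = -∫ x, v x * pd i u x := by
  have hvu : HasCompactSupport fun x => v x * u x := by simpa only [mul_comm] using huv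
  simp only [mul_comm (v _)]
  refine integral_mul_fderiv_eq_neg_fderiv_mul_of_integrable ?_
    (integrable_mul_pd hu.continuous hv huv i)
    ((hu.mul hv).continuous.integrable_of_hasCompactSupport huv)
    (fun x _ => hu.differentiable one_ne_zero x) (fun x _ => hv.differentiable one_ne_zero x)
  simpa only [pd, mul_comm] using integrable_mul_pd hv.continuous hu hvu i

lemma integral_mul_divergence_eq_neg {u : (ι → ℝ) → ℝ} {V : (ι → ℝ) → ι → ℝ}
    (hu : ContDiff ℝ 1 u) (hV : ∀ i, ContDiff ℝ 1 fun x => V x i)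
    (huV : ∀ i, HasCompactSupport fun x => u x * V x i) :
    ∫ x, u x * divergence V x = -∫ x, V x ⬝ᵥ grad u x := by
  have hVu (i : ι) : HasCompactSupport fun x => V x i * u x := by
    simpa only [mul_comm] using huV i
  simp only [divergence, Finset.mul_sum, dotProduct, grad]
  rw [integral_finsetSum _ fun i _ => integrable_mul_pd hu.continuous (hV i) (huV i) i,
    integral_finsetSum _ fun i _ => integrable_mul_pd (hV i).continuous hu (hVu i) i,
    ← Finset.sum_neg_distrib]
  exact Finset.sum_congr rfl fun i _ => integral_mul_pd_eq_neg hu (hV i) (huV i) i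

/-- The generator `L f = ⟨b, ∇f⟩ + ∑ D_{ij} ∂_i ∂_j f` of the diffusion with drift `b` and
diffusion matrix `D`. -/
noncomputable def diffusionGenerator (b : (ι → ℝ) → ι → ℝ) (D : (ι → ℝ) → Matrix ι ι ℝ)
    (f : (ι → ℝ) → ℝ) (x : ι → ℝ) : ℝ :=
  b x ⬝ᵥ grad f x + ∑ i, ∑ j, D x i j * pd i (pd j f) x

/-- The generator `L̄ f = -⟨b, ∇f⟩ + 2 ρ⁻¹ ⟨∇·(Dρ), ∇f⟩ + ∑ D_{ij} ∂_i ∂_j f` of the time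
reversal of the diffusion with drift `b`, diffusion matrix `D` and stationary density `ρ`. -/
noncomputable def timeReversedGenerator (b : (ι → ℝ) → ι → ℝ) (D : (ι → ℝ) → Matrix ι ι ℝ)
    (ρ f : (ι → ℝ) → ℝ) (x : ι → ℝ) : ℝ :=
  -(b x ⬝ᵥ grad f x)
    + 2 * (ρ x)⁻¹ * (matrixDivergence (fun y => .of fun i j => D y i j * ρ y) x ⬝ᵥ grad f x)
    + ∑ i, ∑ j, D x i j * pd i (pd j f) x

lemma diffusionGenerator_mul_density (b : (ι → ℝ) → ι → ℝ) (D : (ι → ℝ) → Matrix ι ι ℝ)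
    (ρ f : (ι → ℝ) → ℝ) (x : ι → ℝ) :
    diffusionGenerator b D f x * ρ x =
      diffusionGenerator (fun y i => b y i * ρ y) (fun y => .of fun i j => D y i j * ρ y) f x := by
  simp only [diffusionGenerator, dotProduct, Matrix.of_apply, add_mul, Finset.sum_mul,
    mul_right_comm _ _ (ρ x)]

lemma timeReversedGenerator_mul_density (b : (ι → ℝ) → ι → ℝ) (D : (ι → ℝ) → Matrix ι ι ℝ)
    {ρ : (ι → ℝ) → ℝ} (f : (ι → ℝ) → ℝ) {x : ι → ℝ} (hρ : ρ x ≠ 0) :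
    timeReversedGenerator b D ρ f x * ρ x =
      diffusionGenerator
        ((2 : ℝ) • matrixDivergence (fun y => .of fun i j => D y i j * ρ y)
          - fun y i => b y i * ρ y)
        (fun y => .of fun i j => D y i j * ρ y) f x := by
  have drift_mul_density :
      (fun i => b x i * ρ x) ⬝ᵥ grad f x = (b x ⬝ᵥ grad f x) * ρ x := by
    simp only [dotProduct, Finset.sum_mul, mul_right_comm _ _ (ρ x)]
  simp only [timeReversedGenerator, diffusionGenerator, Pi.sub_apply, Pi.smul_apply,
    sub_dotProduct, smul_dotProduct, smul_eq_mul, drift_mul_density, Matrix.of_apply,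
    mul_right_comm _ (ρ x), ← Finset.sum_mul]
  field_simp
  ring

/-- The probability current `J = β - ∇·A` of a diffusion, in terms of its density-weighted drift
`β = b ρ` and diffusion matrix `A = D ρ`. -/
noncomputable def probabilityCurrent (β : (ι → ℝ) → ι → ℝ) (A : (ι → ℝ) → Matrix ι ι ℝ) :
    (ι → ℝ) → ι → ℝ :=
  β - matrixDivergence A

lemma probabilityCurrent_reversed (β : (ι → ℝ) → ι → ℝ) (A : (ι → ℝ) → Matrix ι ι ℝ) :
    probabilityCurrent ((2 : ℝ) • matrixDivergence A - β) A = -probabilityCurrent β A := by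
  simp only [probabilityCurrent]
  module

lemma contDiff_probabilityCurrent {β : (ι → ℝ) → ι → ℝ} {A : (ι → ℝ) → Matrix ι ι ℝ}
    (hβ : ∀ i, ContDiff ℝ 1 fun x => β x i) (hA : ∀ i j, ContDiff ℝ 2 fun x => A x i j) (i : ι) :
    ContDiff ℝ 1 fun x => probabilityCurrent β A x i :=
  (hβ i).sub (contDiff_matrixDivergence hA i)

lemma divergence_probabilityCurrent {β : (ι → ℝ) → ι → ℝ} {A : (ι → ℝ) → Matrix ι ι ℝ}
    (hβ : ∀ i, ContDiff ℝ 1 fun x => β x i) (hA : ∀ i j, ContDiff ℝ 2 fun x => A x i j)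
    (x : ι → ℝ) :
    divergence (probabilityCurrent β A) x = divergence β x - divergence (matrixDivergence A) x :=
  divergence_sub (fun i => (hβ i).differentiable one_ne_zero x)
    fun i => (contDiff_matrixDivergence hA i).differentiable one_ne_zero x

lemma diffusionGenerator_eq_divergence_add {A : (ι → ℝ) → Matrix ι ι ℝ}
    {f : (ι → ℝ) → ℝ} (hA : ∀ i j, ContDiff ℝ 1 fun x => A x i j) (hA_symm : ∀ x, (A x).IsSymm)
    (hf : ContDiff ℝ 2 f) (β : (ι → ℝ) → ι → ℝ) (x : ι → ℝ) :
    diffusionGenerator β A f x =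
      divergence (fun y => A y *ᵥ grad f y) x + probabilityCurrent β A x ⬝ᵥ grad f x := by
  rw [divergence_mulVec_grad (fun i j => (hA i j).differentiable one_ne_zero x)
    (fun j => (contDiff_pd hf one_add_one_eq_two.le j).differentiable one_ne_zero x),
    diffusionGenerator, probabilityCurrent, Pi.sub_apply, sub_dotProduct]
  simp only [(hA_symm _).eq]
  ring

variable {f g : (ι → ℝ) → ℝ}

lemma contDiff_mulVec_grad {A : (ι → ℝ) → Matrix ι ι ℝ}
    (hA : ∀ i j, ContDiff ℝ 1 fun x => A x i j) (hf : ContDiff ℝ 2 f) (i : ι) :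
    ContDiff ℝ 1 fun x => (A x *ᵥ grad f x) i :=
  ContDiff.sum fun j _ => (hA i j).mul (contDiff_pd hf one_add_one_eq_two.le j)

lemma integrable_mul_divergence_mulVec_grad {A : (ι → ℝ) → Matrix ι ι ℝ}
    (hA : ∀ i j, ContDiff ℝ 1 fun x => A x i j) (hf : Continuous f) (hg : ContDiff ℝ 2 g)
    (hfg : HasCompactSupport fun x => f x * g x) :
    Integrable fun x => f x * divergence (fun y => A y *ᵥ grad g y) x :=
  integrable_mul_divergence hf (contDiff_mulVec_grad hA hg)
    (hasCompactSupport_mul_mulVec_grad hf hfg)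

lemma integral_mul_divergence_mulVec_grad_comm {A : (ι → ℝ) → Matrix ι ι ℝ}
    (hA : ∀ i j, ContDiff ℝ 1 fun x => A x i j) (hA_symm : ∀ x, (A x).IsSymm)
    (hf : ContDiff ℝ 2 f) (hg : ContDiff ℝ 2 g) (hfg : HasCompactSupport fun x => f x * g x) :
    ∫ x, f x * divergence (fun y => A y *ᵥ grad g y) x =
      ∫ x, g x * divergence (fun y => A y *ᵥ grad f y) x := by
  have hgf : HasCompactSupport fun x => g x * f x := by simpa only [mul_comm] using hfg
  have quadratic_form_comm (x : ι → ℝ) :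
      (A x *ᵥ grad g x) ⬝ᵥ grad f x = (A x *ᵥ grad f x) ⬝ᵥ grad g x := by
    rw [dotProduct_comm, Matrix.dotProduct_mulVec, ← Matrix.mulVec_transpose, (hA_symm x).eq]
  rw [integral_mul_divergence_eq_neg (hf.of_le one_le_two) (contDiff_mulVec_grad hA hg)
      (hasCompactSupport_mul_mulVec_grad hf.continuous hfg),
    integral_mul_divergence_eq_neg (hg.of_le one_le_two) (contDiff_mulVec_grad hA hf)
      (hasCompactSupport_mul_mulVec_grad hg.continuous hgf)]
  simp only [quadratic_form_comm]

lemma dotProduct_grad_eq_divergence_smul {J : (ι → ℝ) → ι → ℝ} {x : ι → ℝ}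
    (hJ : ∀ i, DifferentiableAt ℝ (fun y => J y i) x) (hJ_div : divergence J x = 0)
    (hg : DifferentiableAt ℝ g x) :
    J x ⬝ᵥ grad g x = divergence (fun y => g y • J y) x := by
  rw [divergence_smul hg hJ, hJ_div, mul_zero, zero_add]

lemma integral_mul_dotProduct_grad_eq_neg {J : (ι → ℝ) → ι → ℝ}
    (hJ : ∀ i, ContDiff ℝ 1 fun x => J x i) (hJ_div : ∀ x, divergence J x = 0)
    (hf : ContDiff ℝ 1 f) (hg : ContDiff ℝ 1 g) (hfg : HasCompactSupport fun x => f x * g x) :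
    ∫ x, f x * (J x ⬝ᵥ grad g x) = -∫ x, g x * (J x ⬝ᵥ grad f x) := by
  have flux_support (i : ι) : HasCompactSupport fun x => f x * (g x • J x) i := by
    simpa only [Pi.mul_def, Pi.smul_apply, smul_eq_mul, mul_assoc] using
      hfg.mul_right (f' := fun x => J x i)
  calc ∫ x, f x * (J x ⬝ᵥ grad g x)
      = ∫ x, f x * divergence (fun y => g y • J y) x := by
        simp only [dotProduct_grad_eq_divergence_smul
          (fun i => (hJ i).differentiable one_ne_zero _) (hJ_div _)
          (hg.differentiable one_ne_zero _)]
    _ = -∫ x, g x * (J x ⬝ᵥ grad f x) := by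
        rw [integral_mul_divergence_eq_neg (V := fun y => g y • J y) hf (fun i => hg.mul (hJ i))
          flux_support]
        simp only [smul_dotProduct, smul_eq_mul]

lemma integrable_mul_dotProduct_grad {J : (ι → ℝ) → ι → ℝ}
    (hJ : ∀ i, Continuous fun x => J x i) (hf : Continuous f) (hg : ContDiff ℝ 1 g)
    (hfg : HasCompactSupport fun x => f x * g x) :
    Integrable fun x => f x * (J x ⬝ᵥ grad g x) := by
  have component_integrable (i : ι) : Integrable fun x => f x * J x i * pd i g x := by
    refine integrable_mul_pd (hf.mul (hJ i)) hg ?_ i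
    simpa only [Pi.mul_def, mul_right_comm] using hfg.mul_right (f' := fun x => J x i)
  simpa only [dotProduct, grad, Finset.mul_sum, ← mul_assoc] using
    integrable_finsetSum _ fun i _ => component_integrable i

theorem integral_mul_diffusionGenerator_eq_reversed {β : (ι → ℝ) → ι → ℝ}
    {A : (ι → ℝ) → Matrix ι ι ℝ}
    (hβ : ∀ i, ContDiff ℝ 1 fun x => β x i) (hA : ∀ i j, ContDiff ℝ 2 fun x => A x i j)
    (hA_symm : ∀ x, (A x).IsSymm)
    (hβA : ∀ x, divergence β x = divergence (matrixDivergence A) x)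
    (hf : ContDiff ℝ 2 f) (hg : ContDiff ℝ 2 g) (hfg : HasCompactSupport fun x => f x * g x) :
    ∫ x, f x * diffusionGenerator β A g x =
      ∫ x, g x * diffusionGenerator ((2 : ℝ) • matrixDivergence A - β) A f x := by
  have hgf : HasCompactSupport fun x => g x * f x := by simpa only [mul_comm] using hfg
  have hA₁ (i j : ι) : ContDiff ℝ 1 fun x => A x i j := (hA i j).of_le one_le_two
  have hJ := contDiff_probabilityCurrent hβ hA
  have hJ_div (x : ι → ℝ) : divergence (probabilityCurrent β A) x = 0 := by
    rw [divergence_probabilityCurrent hβ hA, hβA, sub_self]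
  simp only [diffusionGenerator_eq_divergence_add hA₁ hA_symm hf,
    diffusionGenerator_eq_divergence_add hA₁ hA_symm hg, probabilityCurrent_reversed,
    Pi.neg_apply, neg_dotProduct, ← sub_eq_add_neg, mul_add, mul_sub]
  rw [integral_add (integrable_mul_divergence_mulVec_grad hA₁ hf.continuous hg hfg)
      (integrable_mul_dotProduct_grad (fun i => (hJ i).continuous) hf.continuous
        (hg.of_le one_le_two) hfg),
    integral_sub (integrable_mul_divergence_mulVec_grad hA₁ hg.continuous hf hgf)
      (integrable_mul_dotProduct_grad (fun i => (hJ i).continuous) hg.continuous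
        (hf.of_le one_le_two) hgf),
    integral_mul_divergence_mulVec_grad_comm hA₁ hA_symm hf hg hfg,
    integral_mul_dotProduct_grad_eq_neg hJ hJ_div (hf.of_le one_le_two) (hg.of_le one_le_two) hfg,
    sub_eq_add_neg]

end Generators

theorem time_reversed_generator_is_adjoint_general {ι : Type*} [Fintype ι] [DecidableEq ι]
    (b : (ι → ℝ) → ι → ℝ) (D : (ι → ℝ) → Matrix ι ι ℝ) (ρ : (ι → ℝ) → ℝ)
    (hbρ : ∀ i, ContDiff ℝ 1 fun x => b x i * ρ x)
    (hDρ : ∀ i j, ContDiff ℝ 2 fun x => D x i j * ρ x)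
    (hD_symm : ∀ x, (D x).IsSymm) (hρ : ∀ x, ρ x ≠ 0)
    (hFP : ∀ x, ∑ i, pd i (fun y => b y i * ρ y) x
      = ∑ i, ∑ j, pd i (pd j (fun z => D z i j * ρ z)) x)
    (f g : (ι → ℝ) → ℝ) (hf : ContDiff ℝ 2 f) (hg : ContDiff ℝ 2 g)
    (hfg : HasCompactSupport fun x => f x * g x) :
    ∫ x, f x * diffusionGenerator b D g x * ρ x
      = ∫ x, g x * timeReversedGenerator b D ρ f x * ρ x := by
  have hDρ_symm (x : ι → ℝ) : (Matrix.of fun i j => D x i j * ρ x).IsSymm :=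
    Matrix.IsSymm.ext fun i j => congrArg (· * ρ x) ((hD_symm x).apply i j)
  simp only [mul_assoc, diffusionGenerator_mul_density, timeReversedGenerator_mul_density, hρ,
    ne_eq, not_false_eq_true]
  exact integral_mul_diffusionGenerator_eq_reversed hbρ hDρ hDρ_symm
    (fun x => (hFP x).trans (divergence_matrixDivergence hDρ x).symm) hf hg hfg

/-- **The generator of the time-reversed diffusion is the adjoint of the generator.**
If `ρ > 0` satisfies the stationary Fokker–Planck equation for the diffusion with drift
`b` and diffusion matrix `D`, then for all test functions `f, g`,
`∫ f (L g) ρ = ∫ g (L̄ f) ρ`, where `L g = ⟨b, ∇g⟩ + Σ D_{ij} ∂_i ∂_j g` and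
`L̄ f = -⟨b, ∇f⟩ + 2 ρ⁻¹ ⟨∇·(Dρ), ∇f⟩ + Σ D_{ij} ∂_i ∂_j f`. -/
theorem time_reversed_generator_is_adjoint (d : ℕ) (hd : 1 ≤ d)
    (b : (Fin d → ℝ) → (Fin d → ℝ))
    (hb : ∀ i, ContDiff ℝ 1 (fun x => b x i))
    (D : (Fin d → ℝ) → Matrix (Fin d) (Fin d) ℝ)
    (hD : ∀ i j, ContDiff ℝ 2 (fun x => D x i j))
    (hDsymm : ∀ x, (D x).IsSymm)
    (ρ : (Fin d → ℝ) → ℝ) (hρ : ContDiff ℝ 2 ρ) (hρpos : ∀ x, 0 < ρ x)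
    (hFP : ∀ x, ∑ i, pd i (fun y => b y i * ρ y) x
      = ∑ i, ∑ j, pd i (pd j (fun z => D z i j * ρ z)) x)
    (f g : (Fin d → ℝ) → ℝ)
    (hf : ContDiff ℝ (⊤ : ℕ∞) f) (hfc : HasCompactSupport f)
    (hg : ContDiff ℝ (⊤ : ℕ∞) g) (hgc : HasCompactSupport g) :
    ∫ x, f x * ((∑ i, b x i * pd i g x) + ∑ i, ∑ j, D x i j * pd i (pd j g) x) * ρ x
      = ∫ x, g x * (-(∑ i, b x i * pd i f x)
          + 2 * (ρ x)⁻¹ * (∑ i, (∑ j, pd j (fun y => D y i j * ρ y) x) * pd i f x)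
          + ∑ i, ∑ j, D x i j * pd i (pd j f) x) * ρ x := by
  have two_le : (2 : WithTop ℕ∞) ≤ (⊤ : ℕ∞) := WithTop.coe_le_coe.2 le_top
  exact time_reversed_generator_is_adjoint_general b D ρ (fun i => (hb i).mul (hρ.of_le one_le_two))
    (fun i j => (hD i j).mul hρ) hDsymm (fun x => (hρpos x).ne') hFP f g (hf.of_le two_le)
    (hg.of_le two_le) hfc.mul_right
end
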